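/- (Annulus decomposition bound.) Fix integers m ≥ 1, k ≥ 1 and a real b > 0. There exists a constant M_k depending only on m, k and b such that: for every finite point set X ⊂ ℝ^m, if s is the largest index j ≥ 0 with X ∩ A_j nonempty (where A_0 = B(0,2) and A_j = B(0,2^{j+1}) \ B(0,2^j) for j ≥ 1), then L_k^b(X) ≤ Σ_{j=0}^{s} L_k^b(X ∩ A_j) + M_k · 2^{bs}; consequently L_k^b(X) ≤ Σ_{j=0}^{s} L_k^b(X ∩ A_j) + M_k · max_{x ∈ X} ‖x‖^b. -/

import Mathlib

/-!
Write `q = 2 ^ b` and let `N_j` be the number of points of `X` in the ball `B(0, 2^{j+1})`.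
The excess of `∑_{x ∈ X ∩ A_j} D_k(x, X)^b` over `L_k^b(X ∩ A_j)` is bounded annulus by annulus
(`annulus_excess`).

* If `X ∩ A_j` has more than `k` points, there is no excess, since `D_k` decreases as the set grows
  (`nnDistSet_anti`).
* If it has at most `k` points but `N_j > k`, each of them has `k` neighbours in `B(0, 2^{j+1})`,
  so it contributes at most `(2^{j+2})^b = q^{j+2}`; summed over `j ≤ s`, this is a geometric sum
  dominated by its last term, of order `q^s`.
* If `N_j ≤ k`, the crude bound `(2^{s+2})^b = q^{s+2}` is enough, because all annuli of this kind
  together contain at most `k` points of `X`: they lie in the ball belonging to the largest such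
  `j` (`sum_card_sparse`).

Altogether `M = k q² (q / (q - 1) + 1)` works. For the bound by the maximal norm: if `s ≥ 1`,
a point of `X ∩ A_s` has norm at least `2^s`, and if `s = 0` then `X = X ∩ A_0`.
-/

open Real Metric
open scoped Classical

/-- The distance from `x` to its `k`-nearest neighbour in the finite point set
`X \ {x}`: the `k`-th smallest of the distances from `x` to the other points of `X`,
realised as the infimum of radii containing at least `k` of them; it is `0` when
`card X ≤ k`. -/
noncomputable def nnDistSet {E : Type*} [MetricSpace E] (k : ℕ) (x : E)
    (X : Finset E) : ℝ :=
  if k < X.card then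
    sInf {r : ℝ | k ≤ Set.ncard {y | y ∈ X ∧ y ≠ x ∧ dist x y ≤ r}}
  else 0

/-- The `k`-nearest-neighbour power sum `L_k^b(X) = Σ_{x ∈ X} D_k(x,X)^b`. -/
noncomputable def nnPowerSum {E : Type*} [MetricSpace E] (k : ℕ) (b : ℝ)
    (X : Finset E) : ℝ :=
  ∑ x ∈ X, nnDistSet k x X ^ b

/-- The dyadic annuli: `A 0 = B(0,2)` and `A j = B(0,2^{j+1}) \ B(0,2^j)` for `j ≥ 1`. -/
noncomputable def annulus (m : ℕ) : ℕ → Set (EuclideanSpace ℝ (Fin m))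
  | 0 => closedBall 0 2
  | (j + 1) => closedBall 0 (2 ^ (j + 2)) \ closedBall 0 (2 ^ (j + 1))

/-! ### Nearest-neighbour distances -/

/-- For `k ≥ 1` the radii in the definition of `nnDistSet` are nonnegative; for `k = 0` every real
number would qualify. -/
lemma nnRadius_nonneg {E : Type*} [MetricSpace E] {k : ℕ} (hk : 1 ≤ k) {x : E} {X : Finset E}
    {r : ℝ} (hr : k ≤ Set.ncard {y | y ∈ X ∧ y ≠ x ∧ dist x y ≤ r}) : 0 ≤ r := by
  have hne : ({y | y ∈ X ∧ y ≠ x ∧ dist x y ≤ r} : Set E).Nonempty := by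
    apply Set.nonempty_of_ncard_ne_zero
    omega
  obtain ⟨y, -, -, hy⟩ := hne
  exact dist_nonneg.trans hy

lemma nnDistSet_nonneg {E : Type*} [MetricSpace E] {k : ℕ} (hk : 1 ≤ k) (x : E) (X : Finset E) :
    0 ≤ nnDistSet k x X := by
  unfold nnDistSet
  split_ifs
  · exact Real.sInf_nonneg fun r hr => nnRadius_nonneg hk hr
  · exact le_rfl

lemma nnRadius_mono {E : Type*} [MetricSpace E] {x : E} {X Y : Finset E} (hYX : Y ⊆ X) (r : ℝ) :
    Set.ncard {y | y ∈ Y ∧ y ≠ x ∧ dist x y ≤ r} ≤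
      Set.ncard {y | y ∈ X ∧ y ≠ x ∧ dist x y ≤ r} :=
  Set.ncard_le_ncard (fun _ hy => ⟨hYX hy.1, hy.2⟩)
    (X.finite_toSet.subset fun _ hy => hy.1)

lemma nnRadius_mem {E : Type*} [MetricSpace E] {k : ℕ} {x : E} {Y : Finset E}
    (hY : k < Y.card) {r : ℝ} (hr : ∀ y ∈ Y, dist x y ≤ r) :
    k ≤ Set.ncard {y | y ∈ Y ∧ y ≠ x ∧ dist x y ≤ r} := by
  have h : ({y | y ∈ Y ∧ y ≠ x ∧ dist x y ≤ r} : Set E) = ↑(Y.erase x) := by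
    ext y
    simp only [Set.mem_ofPred_eq, Finset.mem_coe, Finset.mem_erase]
    constructor
    · rintro ⟨h1, h2, -⟩
      exact ⟨h2, h1⟩
    · rintro ⟨h1, h2⟩
      exact ⟨h2, h1, hr y h2⟩
  rw [h, Set.ncard_coe_finset]
  have := Finset.pred_card_le_card_erase (s := Y) (a := x)
  omega

/-- If more than `k` points of `X` lie within `r` of `x`, then `D_k(x, X) ≤ r`; this holds even if
`x` is one of them. -/
lemma nnDistSet_le_of_subset {E : Type*} [MetricSpace E] {k : ℕ} (hk : 1 ≤ k) {x : E}
    {X Y : Finset E} (hYX : Y ⊆ X) (hY : k < Y.card) {r : ℝ} (hr : ∀ y ∈ Y, dist x y ≤ r) :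
    nnDistSet k x X ≤ r := by
  unfold nnDistSet
  rw [if_pos (hY.trans_le (Finset.card_le_card hYX))]
  exact csInf_le ⟨0, fun r hr => nnRadius_nonneg hk hr⟩
    ((nnRadius_mem hY hr).trans (nnRadius_mono hYX r))

lemma nnDistSet_anti {E : Type*} [MetricSpace E] {k : ℕ} (hk : 1 ≤ k) {x : E}
    {X Y : Finset E} (hYX : Y ⊆ X) (hY : k < Y.card) : nnDistSet k x X ≤ nnDistSet k x Y := by
  unfold nnDistSet
  rw [if_pos hY, if_pos (hY.trans_le (Finset.card_le_card hYX))]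
  refine csInf_le_csInf ⟨0, fun r hr => nnRadius_nonneg hk hr⟩ ?_
    fun r (hr : k ≤ _) => hr.trans (nnRadius_mono hYX r)
  exact ⟨∑ y ∈ Y, dist x y, nnRadius_mem hY fun y hy =>
    Finset.single_le_sum (f := fun y => dist x y) (fun _ _ => dist_nonneg) hy⟩

lemma nnDistSet_le {E : Type*} [MetricSpace E] {k : ℕ} (hk : 1 ≤ k) {x : E}
    {X : Finset E} {r : ℝ} (hr0 : 0 ≤ r) (hr : ∀ y ∈ X, dist x y ≤ r) :
    nnDistSet k x X ≤ r := by
  by_cases h : k < X.card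
  · exact nnDistSet_le_of_subset hk subset_rfl h hr
  · unfold nnDistSet
    rwa [if_neg h]

lemma nnPowerSum_nonneg {E : Type*} [MetricSpace E] {k : ℕ} (hk : 1 ≤ k) (b : ℝ) (X : Finset E) :
    0 ≤ nnPowerSum k b X :=
  Finset.sum_nonneg fun x _ => Real.rpow_nonneg (nnDistSet_nonneg hk x X) b

/-! ### Dyadic annuli -/

lemma norm_le_of_mem_annulus {m j : ℕ} {x : EuclideanSpace ℝ (Fin m)} (hx : x ∈ annulus m j) :
    ‖x‖ ≤ 2 ^ (j + 1) := by
  cases j with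
  | zero => simpa [annulus] using hx
  | succ j => simpa using hx.1

lemma lt_norm_of_mem_annulus {m j : ℕ} (hj : 1 ≤ j) {x : EuclideanSpace ℝ (Fin m)}
    (hx : x ∈ annulus m j) : 2 ^ j < ‖x‖ := by
  cases j with
  | zero => omega
  | succ j => simpa using hx.2

lemma annulus_disjoint {m i j : ℕ} {x : EuclideanSpace ℝ (Fin m)} (hij : i < j)
    (hi : x ∈ annulus m i) (hj : x ∈ annulus m j) : False := by
  have h1 := norm_le_of_mem_annulus hi
  have h2 := lt_norm_of_mem_annulus (by omega) hj
  have h3 : (2 : ℝ) ^ (i + 1) ≤ 2 ^ j := pow_le_pow_right₀ (by norm_num) hij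
  linarith

lemma exists_mem_annulus {m : ℕ} (x : EuclideanSpace ℝ (Fin m)) : ∃ j, x ∈ annulus m j := by
  have hex : ∃ j : ℕ, ‖x‖ ≤ 2 ^ (j + 1) := by
    obtain ⟨n, hn⟩ := pow_unbounded_of_one_lt ‖x‖ (one_lt_two (α := ℝ))
    exact ⟨n, hn.le.trans (pow_le_pow_right₀ (by norm_num) (by omega))⟩
  -- the least `j` whose ball contains `x`
  refine ⟨Nat.find hex, ?_⟩
  have h1 := Nat.find_spec hex
  have h2 := fun i => Nat.find_min hex (m := i)
  generalize Nat.find hex = j at h1 h2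
  cases j with
  | zero => simpa [annulus] using h1
  | succ j =>
    have h3 := h2 j (by omega)
    exact ⟨by simpa using h1, by simpa using h3⟩

lemma annulus_pairwiseDisjoint {m : ℕ} (X : Finset (EuclideanSpace ℝ (Fin m))) (I : Set ℕ) :
    I.PairwiseDisjoint fun j => X.filter (· ∈ annulus m j) := by
  intro i _ j _ hij
  refine Finset.disjoint_left.2 fun x hi hj => ?_
  have hi' := (Finset.mem_filter.1 hi).2
  have hj' := (Finset.mem_filter.1 hj).2
  rcases lt_or_gt_of_ne hij with h | h
  · exact annulus_disjoint h hi' hj'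
  · exact annulus_disjoint h hj' hi'

lemma eq_biUnion_annulus {m s : ℕ} {X : Finset (EuclideanSpace ℝ (Fin m))}
    (hs : ∀ j, s < j → X.filter (· ∈ annulus m j) = ∅) :
    X = (Finset.range (s + 1)).biUnion fun j => X.filter (· ∈ annulus m j) := by
  ext x
  simp only [Finset.mem_biUnion, Finset.mem_range, Finset.mem_filter]
  constructor
  · intro hx
    obtain ⟨j, hj⟩ := exists_mem_annulus x
    refine ⟨j, ?_, hx, hj⟩
    by_contra hsj
    have : x ∈ X.filter (· ∈ annulus m j) := Finset.mem_filter.2 ⟨hx, hj⟩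
    rw [hs j (by omega)] at this
    simp at this
  · rintro ⟨_, _, hx, _⟩
    exact hx

lemma norm_le_of_outermost {m s : ℕ} {X : Finset (EuclideanSpace ℝ (Fin m))}
    (hs : ∀ j, s < j → X.filter (· ∈ annulus m j) = ∅) {x : EuclideanSpace ℝ (Fin m)}
    (hx : x ∈ X) : ‖x‖ ≤ 2 ^ (s + 1) := by
  rw [eq_biUnion_annulus hs] at hx
  simp only [Finset.mem_biUnion, Finset.mem_range, Finset.mem_filter] at hx
  obtain ⟨j, hj, -, hxj⟩ := hx
  exact (norm_le_of_mem_annulus hxj).trans (pow_le_pow_right₀ (by norm_num) (by omega))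

lemma dist_le_of_norm_le {m n : ℕ} {x y : EuclideanSpace ℝ (Fin m)}
    (hx : ‖x‖ ≤ 2 ^ (n + 1)) (hy : ‖y‖ ≤ 2 ^ (n + 1)) : dist x y ≤ 2 ^ (n + 2) := by
  have := dist_le_norm_add_norm x y
  rw [pow_succ _ (n + 1)]
  linarith

/-! ### The excess over the annulus sums -/

/-- The points of all annuli `A_j` with `N_j ≤ k` lie in the ball belonging to the largest such
`j`, so there are at most `k` of them. -/
lemma sum_card_sparse {m : ℕ} (k s : ℕ) (X : Finset (EuclideanSpace ℝ (Fin m))) :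
    (∑ j ∈ Finset.range (s + 1),
      if (X.filter (‖·‖ ≤ 2 ^ (j + 1))).card ≤ k then (X.filter (· ∈ annulus m j)).card else 0)
      ≤ k := by
  rw [← Finset.sum_filter]
  set I := (Finset.range (s + 1)).filter fun j => (X.filter (‖·‖ ≤ 2 ^ (j + 1))).card ≤ k with hI
  rcases I.eq_empty_or_nonempty with h | h
  · simp [h]
  · have hmem := I.max'_mem h
    rw [← Finset.card_biUnion (annulus_pairwiseDisjoint X (I : Set ℕ))]
    refine le_trans (Finset.card_le_card ?_) (Finset.mem_filter.1 hmem).2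
    intro x hx
    simp only [Finset.mem_biUnion, Finset.mem_filter] at hx ⊢
    obtain ⟨j, hj, hxX, hxj⟩ := hx
    exact ⟨hxX, (norm_le_of_mem_annulus hxj).trans
      (pow_le_pow_right₀ (by norm_num) (Nat.succ_le_succ (I.le_max' j hj)))⟩

lemma annulus_excess {m k : ℕ} (hk : 1 ≤ k) {b : ℝ} (hb : 0 < b) {s : ℕ}
    {X : Finset (EuclideanSpace ℝ (Fin m))}
    (hs : ∀ j, s < j → X.filter (· ∈ annulus m j) = ∅) (j : ℕ) :
    ∑ x ∈ X.filter (· ∈ annulus m j), nnDistSet k x X ^ b ≤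
      nnPowerSum k b (X.filter (· ∈ annulus m j)) + (k * ((2 : ℝ) ^ b) ^ (j + 2) +
        ((if (X.filter (‖·‖ ≤ 2 ^ (j + 1))).card ≤ k
          then (X.filter (· ∈ annulus m j)).card else 0 : ℕ) : ℝ) * ((2 : ℝ) ^ b) ^ (s + 2)) := by
  set Y := X.filter (· ∈ annulus m j) with hY
  have hq : (0 : ℝ) < (2 : ℝ) ^ b := by positivity
  have hL := nnPowerSum_nonneg hk b Y
  have hYX : Y ⊆ X := Finset.filter_subset _ _
  by_cases hrich : k < Y.card
  · have : ∑ x ∈ Y, nnDistSet k x X ^ b ≤ nnPowerSum k b Y :=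
      Finset.sum_le_sum fun x _ =>
        Real.rpow_le_rpow (nnDistSet_nonneg hk x X) (nnDistSet_anti hk hYX hrich) hb.le
    refine this.trans (le_add_of_nonneg_right ?_)
    positivity
  · -- applied with `n = s` if `N_j ≤ k`, and with `n = j` otherwise
    have key : ∀ n : ℕ, (∀ x ∈ Y, nnDistSet k x X ≤ 2 ^ (n + 2)) →
        ∑ x ∈ Y, nnDistSet k x X ^ b ≤ Y.card * ((2 : ℝ) ^ b) ^ (n + 2) := by
      intro n hn
      rw [← nsmul_eq_mul]
      refine Finset.sum_le_card_nsmul _ _ _ fun x hx => ?_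
      rw [Real.rpow_pow_comm (by norm_num)]
      exact Real.rpow_le_rpow (nnDistSet_nonneg hk x X) (hn x hx) hb.le
    split_ifs with hN
    · have := key s fun x hx => nnDistSet_le hk (by positivity) fun y hy =>
        dist_le_of_norm_le (norm_le_of_outermost hs (hYX hx)) (norm_le_of_outermost hs hy)
      have h2 : 0 ≤ k * ((2 : ℝ) ^ b) ^ (j + 2) := by positivity
      linarith
    · have := key j fun x hx => nnDistSet_le_of_subset hk (Finset.filter_subset _ X)
        (not_le.1 hN) fun y hy => dist_le_of_norm_le
          (norm_le_of_mem_annulus (Finset.mem_filter.1 hx).2) (Finset.mem_filter.1 hy).2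
      have h2 : (Y.card : ℝ) * ((2 : ℝ) ^ b) ^ (j + 2) ≤ k * ((2 : ℝ) ^ b) ^ (j + 2) := by
        gcongr
        exact not_lt.1 hrich
      simp only [Nat.cast_zero, zero_mul, add_zero]
      linarith

lemma geom_sum_le_last {q : ℝ} (hq : 1 < q) (s : ℕ) :
    ∑ j ∈ Finset.range (s + 1), q ^ j ≤ q / (q - 1) * q ^ s := by
  have : 0 < q - 1 := by linarith
  rw [geom_sum_eq hq.ne', div_mul_eq_mul_div, pow_succ']
  gcongr
  linarith

/-- **Annulus decomposition bound for the `k`-nearest-neighbour power sum.**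
For integers `m, k ≥ 1` and real `b > 0` there is a constant `M_k` (depending only on
`m`, `k`, `b`) such that for every finite `X ⊂ ℝ^m`, if `s` is the largest index `j`
with `X ∩ A_j ≠ ∅`, then
`L_k^b(X) ≤ Σ_{j=0}^s L_k^b(X ∩ A_j) + M_k 2^{bs}`, and consequently
`L_k^b(X) ≤ Σ_{j=0}^s L_k^b(X ∩ A_j) + M_k · max_{x ∈ X} ‖x‖^b`. -/
theorem nnPowerSum_annulus_bound
    (m : ℕ) (hm : 1 ≤ m) (k : ℕ) (hk : 1 ≤ k) (b : ℝ) (hb : 0 < b) :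
    ∃ M : ℝ, 0 < M ∧
      ∀ (X : Finset (EuclideanSpace ℝ (Fin m))) (s : ℕ),
        (X.filter (· ∈ annulus m s)).Nonempty →
        (∀ j, s < j → X.filter (· ∈ annulus m j) = ∅) →
        (nnPowerSum k b X ≤
            (∑ j ∈ Finset.range (s + 1), nnPowerSum k b (X.filter (· ∈ annulus m j))) +
              M * (2 : ℝ) ^ (b * s)) ∧
        ∀ hX : X.Nonempty,
          nnPowerSum k b X ≤
            (∑ j ∈ Finset.range (s + 1), nnPowerSum k b (X.filter (· ∈ annulus m j))) +
              M * X.sup' hX (fun x => ‖x‖ ^ b) := by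
  set q : ℝ := (2 : ℝ) ^ b with hq
  have hq1 : 1 < q := Real.one_lt_rpow (by norm_num) hb
  have hq0 : 0 < q - 1 := by linarith
  have hk0 : (0 : ℝ) < k := by exact_mod_cast hk
  have hM : 0 < k * q ^ 2 * (q / (q - 1) + 1) := by positivity
  refine ⟨k * q ^ 2 * (q / (q - 1) + 1), hM, fun X s hne hs => ?_⟩
  have hqs : (2 : ℝ) ^ (b * s) = q ^ s := Real.rpow_mul_natCast (by norm_num) b s
  have first : nnPowerSum k b X ≤
      (∑ j ∈ Finset.range (s + 1), nnPowerSum k b (X.filter (· ∈ annulus m j))) +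
        k * q ^ 2 * (q / (q - 1) + 1) * (2 : ℝ) ^ (b * s) := by
    have hsplit : nnPowerSum k b X = ∑ j ∈ Finset.range (s + 1),
        ∑ x ∈ X.filter (· ∈ annulus m j), nnDistSet k x X ^ b := by
      rw [← Finset.sum_biUnion (annulus_pairwiseDisjoint X _), ← eq_biUnion_annulus hs]
      rfl
    have hsparse := sum_card_sparse k s X
    have hsparse' := (Nat.cast_le (α := ℝ)).2 hsparse
    rw [Nat.cast_sum] at hsparse'
    rw [hsplit]
    refine (Finset.sum_le_sum fun j _ => annulus_excess hk hb hs j).trans ?_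
    rw [Finset.sum_add_distrib, Finset.sum_add_distrib, ← Finset.sum_mul, ← hq, hqs]
    have h1 : ∑ j ∈ Finset.range (s + 1), (k : ℝ) * q ^ (j + 2) ≤
        k * q ^ 2 * (q / (q - 1) * q ^ s) := by
      have : ∀ j, (k : ℝ) * q ^ (j + 2) = k * q ^ 2 * q ^ j := fun j => by ring
      rw [Finset.sum_congr rfl fun j _ => this j, ← Finset.mul_sum]
      exact mul_le_mul_of_nonneg_left (geom_sum_le_last hq1 s) (by positivity)
    have h2 := mul_le_mul_of_nonneg_right hsparse' (by positivity : 0 ≤ q ^ (s + 2))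
    have h3 : (k : ℝ) * q ^ 2 * (q / (q - 1) + 1) * q ^ s =
        k * q ^ 2 * (q / (q - 1) * q ^ s) + k * q ^ (s + 2) := by ring
    linarith
  refine ⟨first, fun hX => ?_⟩
  obtain ⟨x, hx⟩ := hne
  obtain ⟨hxX, hxs⟩ := Finset.mem_filter.1 hx
  have hsup : ‖x‖ ^ b ≤ X.sup' hX (fun x => ‖x‖ ^ b) :=
    Finset.le_sup' (fun x => ‖x‖ ^ b) hxX
  rcases Nat.eq_zero_or_pos s with rfl | hs1
  · -- the maximal norm may be small here, but `X = X ∩ A_0` and there is no excess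
    have hX0 : X.filter (· ∈ annulus m 0) = X := by
      have h := eq_biUnion_annulus hs
      rw [zero_add, Finset.range_one, Finset.singleton_biUnion] at h
      exact h.symm
    rw [zero_add, Finset.sum_range_one, hX0]
    exact le_add_of_nonneg_right
      (mul_nonneg hM.le ((Real.rpow_nonneg (norm_nonneg x) b).trans hsup))
  · refine first.trans (add_le_add le_rfl (mul_le_mul_of_nonneg_left ?_ hM.le))
    refine le_trans ?_ hsup
    rw [hqs, hq, Real.rpow_pow_comm (by norm_num)]
    exact Real.rpow_le_rpow (by positivity) (lt_norm_of_mem_annulus hs1 hxs).le hb.le
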